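/- arXiv:1204.4794 — 2 statements merged into one kernel-verified Lean document; each statement's English description precedes it below -/
import Mathlib

section
/- Let U ⊆ ℝ² be open, and let f₁, f₂, θ₁, θ₂, Ψ : U → ℝ be smooth with f₁, f₂ nowhere zero. Set ξᵢ(g) = (1/fᵢ)∂ᵢg, b = -θ₁θ₂ + ξ₂(θ₁), c = θ₁θ₂ + ξ₁(θ₂), and assume the four structural equations hold on U: (E1) ∂₂f₁ + (1/2)f₁f₂θ₂ = 0; (E2) ∂₁f₂ - (1/2)f₁f₂θ₁ = 0; (E3) f₁∂₂Ψ - f₂∂₁c - f₁f₂(cθ₁ + θ₂(Ψ+2)) = 0; (E4) -f₁∂₂b + f₂∂₁Ψ + f₁f₂(bθ₂ + θ₁(Ψ-2)) = 0. Then on U: (ξ₁(θ₂) + ξ₂(θ₁))·Ψ = -6θ₁θ₂ + (3/2)(bθ₂² - cθ₁²) - (5/2)(θ₂ξ₂(b) + θ₁ξ₁(c)) + 2(ξ₂(θ₁) - ξ₁(θ₂)) + ξ₂(ξ₂(b)) - ξ₁(ξ₁(c)) - c·ξ₁(θ₁) - b·ξ₂(θ₂). -/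
open scoped Topology

/-- Partial derivative in the first coordinate. -/
noncomputable def pd1 (g : ℝ × ℝ → ℝ) (p : ℝ × ℝ) : ℝ := fderiv ℝ g p (1, 0)

/-- Partial derivative in the second coordinate. -/
noncomputable def pd2 (g : ℝ × ℝ → ℝ) (p : ℝ × ℝ) : ℝ := fderiv ℝ g p (0, 1)

/-- The first-order differential operator ξ₁(g) = (1/f₁)∂₁g. -/
noncomputable def xi1 (f₁ g : ℝ × ℝ → ℝ) : ℝ × ℝ → ℝ := fun p => (1 / f₁ p) * pd1 g p

/-- The first-order differential operator ξ₂(g) = (1/f₂)∂₂g. -/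
noncomputable def xi2 (f₂ g : ℝ × ℝ → ℝ) : ℝ × ℝ → ℝ := fun p => (1 / f₂ p) * pd2 g p

/-- b = -θ₁θ₂ + ξ₂(θ₁) -/
noncomputable def bfun (f₂ θ₁ θ₂ : ℝ × ℝ → ℝ) : ℝ × ℝ → ℝ :=
  fun p => -θ₁ p * θ₂ p + xi2 f₂ θ₁ p

/-- c = θ₁θ₂ + ξ₁(θ₂) -/
noncomputable def cfun (f₁ θ₁ θ₂ : ℝ × ℝ → ℝ) : ℝ × ℝ → ℝ :=
  fun p => θ₁ p * θ₂ p + xi1 f₁ θ₂ p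

/-!
Regard `V = ξ₁` and `W = ξ₂` as vector fields. Then (E1) and (E2) amount to
`[V, W] = -(θ₂ V + θ₁ W) / 2`, while (E3) and (E4), divided by `f₁ f₂`, express `W Ψ - V c` and
`W b - V Ψ` without derivatives. Differentiating the former along `V` and the latter along `W`
gives `V (W Ψ) - W (V Ψ)` in terms of first derivatives of `Ψ`, and so does the commutator
relation. In the difference of the two, the first derivatives of `Ψ` are eliminated by (E3) and
(E4) once more, leaving an identity in which `Ψ` itself occurs only undifferentiated.
-/

open VectorField

section VectorFields

variable {𝕜 E : Type*} [NontriviallyNormedField 𝕜] [NormedAddCommGroup E] [NormedSpace 𝕜 E]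
  {V W : E → E} {f g h : E → 𝕜} {p : E}

/-- The Lie derivative of the scalar function `g` along the vector field `V`, that is, `V` acting
on functions as a first-order differential operator. -/
noncomputable def lieDeriv (V : E → E) (g : E → 𝕜) (p : E) : 𝕜 := fderiv 𝕜 g p (V p)

theorem lieDeriv_congr (hgh : g =ᶠ[𝓝 p] h) : lieDeriv V g p = lieDeriv V h p := by
  rw [lieDeriv, hgh.fderiv_eq, lieDeriv]

theorem lieDeriv_add (hg : DifferentiableAt 𝕜 g p) (hh : DifferentiableAt 𝕜 h p) :
    lieDeriv V (g + h) p = lieDeriv V g p + lieDeriv V h p := by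
  simp only [lieDeriv, fderiv_add hg hh, add_apply]

theorem lieDeriv_sub (hg : DifferentiableAt 𝕜 g p) (hh : DifferentiableAt 𝕜 h p) :
    lieDeriv V (g - h) p = lieDeriv V g p - lieDeriv V h p := by
  simp only [lieDeriv, fderiv_sub hg hh, sub_apply]

theorem lieDeriv_mul (hg : DifferentiableAt 𝕜 g p) (hh : DifferentiableAt 𝕜 h p) :
    lieDeriv V (g * h) p = g p * lieDeriv V h p + h p * lieDeriv V g p := by
  simp only [lieDeriv, fderiv_mul hg hh, add_apply, smul_apply, smul_eq_mul]

theorem lieDeriv_add_const (V : E → E) (g : E → 𝕜) (k : 𝕜) (p : E) :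
    lieDeriv V (fun q => g q + k) p = lieDeriv V g p := by
  simp only [lieDeriv, fderiv_add_const]

theorem lieDeriv_inv (hg : DifferentiableAt 𝕜 g p) (hg0 : g p ≠ 0) :
    lieDeriv V g⁻¹ p = -lieDeriv V g p / g p ^ 2 := by
  have h := ((hasDerivAt_inv hg0).comp_hasFDerivAt p hg.hasFDerivAt).fderiv
  change fderiv 𝕜 (Inv.inv ∘ g) p (V p) = _
  rw [h, smul_apply, smul_eq_mul, lieDeriv]
  ring

theorem lieDeriv_mul_add_mul_add_const {c s t : E → 𝕜} (hc : DifferentiableAt 𝕜 c p)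
    (hs : DifferentiableAt 𝕜 s p) (ht : DifferentiableAt 𝕜 t p) (hg : DifferentiableAt 𝕜 g p)
    (k : 𝕜) :
    lieDeriv V (c * s + t * (fun q => g q + k)) p =
      (c p * lieDeriv V s p + s p * lieDeriv V c p) +
        (t p * lieDeriv V g p + (g p + k) * lieDeriv V t p) := by
  rw [lieDeriv_add (hc.mul hs) (ht.mul (hg.add_const k)), lieDeriv_mul hc hs,
    lieDeriv_mul ht (hg.add_const k), lieDeriv_add_const]

theorem differentiableAt_lieDeriv (hV : DifferentiableAt 𝕜 V p) (hg : ContDiffAt 𝕜 2 g p) :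
    DifferentiableAt 𝕜 (lieDeriv V g) p :=
  ((hg.fderiv_right (m := 1) (by decide)).differentiableAt one_ne_zero).clm_apply hV

theorem lieDeriv_lieBracket {n : WithTop ℕ∞} (hn : minSmoothness 𝕜 2 ≤ n)
    (hV : DifferentiableAt 𝕜 V p) (hW : DifferentiableAt 𝕜 W p) (hg : ContDiffAt 𝕜 n g p) :
    lieDeriv (lieBracket 𝕜 V W) g p =
      lieDeriv V (lieDeriv W g) p - lieDeriv W (lieDeriv V g) p :=
  fderiv_apply_lieBracket hg hn hW hV

/-- The vector field `(1 / f) ∂ᵥ`. For `f = fᵢ` and `v = eᵢ` these form the frame dual to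
`ωᵢ = fᵢ dxᵢ`, and `ξᵢ` is the Lie derivative along them. The field is `0` where `f` vanishes. -/
noncomputable def frameField (f : E → 𝕜) (v : E) (p : E) : E := (f p)⁻¹ • v

theorem differentiableAt_frameField (hf : DifferentiableAt 𝕜 f p) (hf0 : f p ≠ 0) (v : E) :
    DifferentiableAt 𝕜 (frameField f v) p :=
  (hf.inv hf0).smul_const v

theorem lieDeriv_frameField (f g : E → 𝕜) (v p : E) :
    lieDeriv (frameField f v) g p = (f p)⁻¹ * fderiv 𝕜 g p v := by
  simp only [lieDeriv, frameField, map_smul, smul_eq_mul]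

theorem lieBracket_frameField (hf : DifferentiableAt 𝕜 f p) (hf0 : f p ≠ 0)
    (hg : DifferentiableAt 𝕜 g p) (hg0 : g p ≠ 0) (v w : E) :
    lieBracket 𝕜 (frameField f v) (frameField g w) p =
      (lieDeriv (frameField g w) f p / f p) • frameField f v p -
        (lieDeriv (frameField f v) g p / g p) • frameField g w p := by
  have hbracket_const : lieBracket 𝕜 (fun _ : E => v) (fun _ => w) p = 0 := by
    simp [lieBracket]
  have hleft : lieBracket 𝕜 (frameField f v) (fun _ => w) p =
      -lieDeriv (fun _ => w) f⁻¹ p • v + (f p)⁻¹ • lieBracket 𝕜 (fun _ => v) (fun _ => w) p :=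
    lieBracket_smul_left (hf.inv hf0) (differentiableAt_const v)
  have hright : lieBracket 𝕜 (frameField f v) (frameField g w) p =
      lieDeriv (frameField f v) g⁻¹ p • w +
        (g p)⁻¹ • lieBracket 𝕜 (frameField f v) (fun _ => w) p :=
    lieBracket_smul_right (hg.inv hg0) (differentiableAt_const w)
  rw [hright, hleft, hbracket_const, lieDeriv_inv hf hf0, lieDeriv_inv hg hg0,
    lieDeriv_frameField g]
  simp only [lieDeriv, frameField]
  module

theorem lieBracket_frameField_eq_neg_half_smul [CharZero 𝕜] {f₁ f₂ : E → 𝕜} {v w : E} {t₁ t₂ : 𝕜}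
    (hf₁ : DifferentiableAt 𝕜 f₁ p) (hf₂ : DifferentiableAt 𝕜 f₂ p)
    (hf₁0 : f₁ p ≠ 0) (hf₂0 : f₂ p ≠ 0)
    (hE1 : fderiv 𝕜 f₁ p w + (1 / 2) * f₁ p * f₂ p * t₂ = 0)
    (hE2 : fderiv 𝕜 f₂ p v - (1 / 2) * f₁ p * f₂ p * t₁ = 0) :
    lieBracket 𝕜 (frameField f₁ v) (frameField f₂ w) p =
      -(1 / 2 : 𝕜) • (t₂ • frameField f₁ v p + t₁ • frameField f₂ w p) := by
  have hWf₁ : lieDeriv (frameField f₂ w) f₁ p / f₁ p = -(1 / 2) * t₂ := by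
    rw [lieDeriv_frameField]
    field_simp
    linear_combination 2 * hE1
  have hVf₂ : lieDeriv (frameField f₁ v) f₂ p / f₂ p = (1 / 2) * t₁ := by
    rw [lieDeriv_frameField]
    field_simp
    linear_combination 2 * hE2
  rw [lieBracket_frameField hf₁ hf₁0 hf₂ hf₂0, hWf₁, hVf₂]
  module

theorem lieDeriv_frameField_eq_add {f₁ f₂ : E → 𝕜} {v w : E} {r : 𝕜}
    (hf₁0 : f₁ p ≠ 0) (hf₂0 : f₂ p ≠ 0)
    (hfderiv : f₁ p * fderiv 𝕜 g p w - f₂ p * fderiv 𝕜 h p v - f₁ p * f₂ p * r = 0) :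
    lieDeriv (frameField f₂ w) g p = lieDeriv (frameField f₁ v) h p + r := by
  simp only [lieDeriv_frameField]
  field_simp
  linear_combination hfderiv

theorem psi_times_sum_xi_theta_general [CharZero 𝕜] {n : WithTop ℕ∞} (hn : minSmoothness 𝕜 2 ≤ n)
    {θ₁ θ₂ b c Ψ : E → 𝕜} (hV : DifferentiableAt 𝕜 V p) (hW : DifferentiableAt 𝕜 W p)
    (hθ₁ : DifferentiableAt 𝕜 θ₁ p) (hθ₂ : DifferentiableAt 𝕜 θ₂ p)
    (hb : DifferentiableAt 𝕜 b p) (hc : DifferentiableAt 𝕜 c p) (hΨ : ContDiffAt 𝕜 n Ψ p)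
    (hVW : lieBracket 𝕜 V W p = -(1 / 2 : 𝕜) • (θ₂ p • V p + θ₁ p • W p))
    (hWΨ : ∀ᶠ q in 𝓝 p,
      lieDeriv W Ψ q = lieDeriv V c q + (c q * θ₁ q + θ₂ q * (Ψ q + 2)))
    (hWb : ∀ᶠ q in 𝓝 p,
      lieDeriv W b q = lieDeriv V Ψ q + (b q * θ₂ q + θ₁ q * (Ψ q - 2))) :
    (lieDeriv V θ₂ p + lieDeriv W θ₁ p) * Ψ p
      = -6 * θ₁ p * θ₂ p
        + (3 / 2) * (b p * (θ₂ p) ^ 2 - c p * (θ₁ p) ^ 2)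
        - (5 / 2) * (θ₂ p * lieDeriv W b p + θ₁ p * lieDeriv V c p)
        + 2 * (lieDeriv W θ₁ p - lieDeriv V θ₂ p)
        + lieDeriv W (lieDeriv W b) p - lieDeriv V (lieDeriv V c) p
        - c p * lieDeriv V θ₁ p - b p * lieDeriv W θ₂ p := by
  have hΨ2 : ContDiffAt 𝕜 2 Ψ p := hΨ.of_le (le_minSmoothness.trans hn)
  have hΨd : DifferentiableAt 𝕜 Ψ p := hΨ2.differentiableAt two_ne_zero
  have hcomm : lieDeriv V (lieDeriv W Ψ) p - lieDeriv W (lieDeriv V Ψ) p =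
      -(1 / 2) * (θ₂ p * lieDeriv V Ψ p + θ₁ p * lieDeriv W Ψ p) := by
    rw [← lieDeriv_lieBracket hn hV hW hΨ]
    simp only [lieDeriv, hVW, map_smul, map_add, smul_eq_mul]
  have hVVc : lieDeriv V (lieDeriv V c) p = lieDeriv V (lieDeriv W Ψ) p -
      (c p * lieDeriv V θ₁ p + θ₁ p * lieDeriv V c p +
        (θ₂ p * lieDeriv V Ψ p + (Ψ p + 2) * lieDeriv V θ₂ p)) := by
    rw [← lieDeriv_mul_add_mul_add_const hc hθ₁ hθ₂ hΨd,
      ← lieDeriv_sub (differentiableAt_lieDeriv hW hΨ2)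
        ((hc.mul hθ₁).add (hθ₂.mul (hΨd.add_const 2)))]
    exact lieDeriv_congr (hWΨ.mono fun q hq => eq_sub_of_add_eq hq.symm)
  have hWWb : lieDeriv W (lieDeriv W b) p = lieDeriv W (lieDeriv V Ψ) p +
      (b p * lieDeriv W θ₂ p + θ₂ p * lieDeriv W b p +
        (θ₁ p * lieDeriv W Ψ p + (Ψ p + -2) * lieDeriv W θ₁ p)) := by
    rw [← lieDeriv_mul_add_mul_add_const hb hθ₂ hθ₁ hΨd,
      ← lieDeriv_add (differentiableAt_lieDeriv hV hΨ2)
        ((hb.mul hθ₂).add (hθ₁.mul (hΨd.add_const (-2))))]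
    exact lieDeriv_congr (hWb.mono fun q hq => by simpa [sub_eq_add_neg] using hq)
  have hWΨp := hWΨ.self_of_nhds
  have hWbp := hWb.self_of_nhds
  linear_combination hcomm + hVVc - hWWb - (3 / 2) * θ₁ p * hWΨp + (3 / 2) * θ₂ p * hWbp

end VectorFields

theorem xi1_eq_lieDeriv (f g : ℝ × ℝ → ℝ) : xi1 f g = lieDeriv (frameField f (1, 0)) g := by
  funext p
  rw [lieDeriv_frameField, xi1, pd1, one_div]

theorem xi2_eq_lieDeriv (f g : ℝ × ℝ → ℝ) : xi2 f g = lieDeriv (frameField f (0, 1)) g := by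
  funext p
  rw [lieDeriv_frameField, xi2, pd2, one_div]

theorem differentiableAt_bfun {f₂ θ₁ θ₂ : ℝ × ℝ → ℝ} {p : ℝ × ℝ} (hf₂ : DifferentiableAt ℝ f₂ p)
    (hf₂0 : f₂ p ≠ 0) (hθ₁ : ContDiffAt ℝ 2 θ₁ p) (hθ₂ : DifferentiableAt ℝ θ₂ p) :
    DifferentiableAt ℝ (bfun f₂ θ₁ θ₂) p := by
  have hξ : DifferentiableAt ℝ (xi2 f₂ θ₁) p := by
    rw [xi2_eq_lieDeriv]
    exact differentiableAt_lieDeriv (differentiableAt_frameField hf₂ hf₂0 _) hθ₁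
  exact ((hθ₁.differentiableAt two_ne_zero).neg.mul hθ₂).add hξ

theorem differentiableAt_cfun {f₁ θ₁ θ₂ : ℝ × ℝ → ℝ} {p : ℝ × ℝ} (hf₁ : DifferentiableAt ℝ f₁ p)
    (hf₁0 : f₁ p ≠ 0) (hθ₁ : DifferentiableAt ℝ θ₁ p) (hθ₂ : ContDiffAt ℝ 2 θ₂ p) :
    DifferentiableAt ℝ (cfun f₁ θ₁ θ₂) p := by
  have hξ : DifferentiableAt ℝ (xi1 f₁ θ₂) p := by
    rw [xi1_eq_lieDeriv]
    exact differentiableAt_lieDeriv (differentiableAt_frameField hf₁ hf₁0 _) hθ₂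
  exact (hθ₁.mul (hθ₂.differentiableAt two_ne_zero)).add hξ

/-- Under the structural equations (E1)–(E4), one has
`(ξ₁(θ₂) + ξ₂(θ₁))·Ψ = -6θ₁θ₂ + (3/2)(bθ₂² - cθ₁²) - (5/2)(θ₂ξ₂(b) + θ₁ξ₁(c))
  + 2(ξ₂(θ₁) - ξ₁(θ₂)) + ξ₂²(b) - ξ₁²(c) - c·ξ₁(θ₁) - b·ξ₂(θ₂)` on U. -/
theorem psi_times_sum_xi_theta
    (U : Set (ℝ × ℝ)) (hU : IsOpen U)
    (f₁ f₂ θ₁ θ₂ Ψ : ℝ × ℝ → ℝ)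
    (hf₁ : ContDiffOn ℝ (⊤ : ℕ∞) f₁ U) (hf₂ : ContDiffOn ℝ (⊤ : ℕ∞) f₂ U)
    (hθ₁ : ContDiffOn ℝ (⊤ : ℕ∞) θ₁ U) (hθ₂ : ContDiffOn ℝ (⊤ : ℕ∞) θ₂ U)
    (hΨ : ContDiffOn ℝ (⊤ : ℕ∞) Ψ U)
    (hf₁0 : ∀ p ∈ U, f₁ p ≠ 0) (hf₂0 : ∀ p ∈ U, f₂ p ≠ 0)
    (hE1 : ∀ p ∈ U, pd2 f₁ p + (1 / 2) * f₁ p * f₂ p * θ₂ p = 0)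
    (hE2 : ∀ p ∈ U, pd1 f₂ p - (1 / 2) * f₁ p * f₂ p * θ₁ p = 0)
    (hE3 : ∀ p ∈ U, f₁ p * pd2 Ψ p - f₂ p * pd1 (cfun f₁ θ₁ θ₂) p
      - f₁ p * f₂ p * (cfun f₁ θ₁ θ₂ p * θ₁ p + θ₂ p * (Ψ p + 2)) = 0)
    (hE4 : ∀ p ∈ U, -(f₁ p) * pd2 (bfun f₂ θ₁ θ₂) p + f₂ p * pd1 Ψ p
      + f₁ p * f₂ p * (bfun f₂ θ₁ θ₂ p * θ₂ p + θ₁ p * (Ψ p - 2)) = 0) :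
    ∀ p ∈ U,
      (xi1 f₁ θ₂ p + xi2 f₂ θ₁ p) * Ψ p
        = -6 * θ₁ p * θ₂ p
          + (3 / 2) * (bfun f₂ θ₁ θ₂ p * (θ₂ p) ^ 2 - cfun f₁ θ₁ θ₂ p * (θ₁ p) ^ 2)
          - (5 / 2) * (θ₂ p * xi2 f₂ (bfun f₂ θ₁ θ₂) p + θ₁ p * xi1 f₁ (cfun f₁ θ₁ θ₂) p)
          + 2 * (xi2 f₂ θ₁ p - xi1 f₁ θ₂ p)
          + xi2 f₂ (xi2 f₂ (bfun f₂ θ₁ θ₂)) p - xi1 f₁ (xi1 f₁ (cfun f₁ θ₁ θ₂)) p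
          - cfun f₁ θ₁ θ₂ p * xi1 f₁ θ₁ p - bfun f₂ θ₁ θ₂ p * xi2 f₂ θ₂ p := by
  intro p hp
  have hC {g : ℝ × ℝ → ℝ} (hg : ContDiffOn ℝ (⊤ : ℕ∞) g U) : ContDiffAt ℝ 2 g p :=
    contDiffAt_infty.1 (hg.contDiffAt (hU.mem_nhds hp)) 2
  have hd {g : ℝ × ℝ → ℝ} (hg : ContDiffOn ℝ (⊤ : ℕ∞) g U) : DifferentiableAt ℝ g p :=
    (hC hg).differentiableAt two_ne_zero
  simp only [xi1_eq_lieDeriv, xi2_eq_lieDeriv]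
  refine psi_times_sum_xi_theta_general (by simp)
    (differentiableAt_frameField (hd hf₁) (hf₁0 p hp) _)
    (differentiableAt_frameField (hd hf₂) (hf₂0 p hp) _) (hd hθ₁) (hd hθ₂)
    (differentiableAt_bfun (hd hf₂) (hf₂0 p hp) (hC hθ₁) (hd hθ₂))
    (differentiableAt_cfun (hd hf₁) (hf₁0 p hp) (hd hθ₁) (hC hθ₂)) (hC hΨ)
    (lieBracket_frameField_eq_neg_half_smul (hd hf₁) (hd hf₂) (hf₁0 p hp) (hf₂0 p hp)
      (hE1 p hp) (hE2 p hp)) ?_ ?_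
  · filter_upwards [hU.mem_nhds hp] with q hq
    exact lieDeriv_frameField_eq_add (hf₁0 q hq) (hf₂0 q hq) (hE3 q hq)
  · filter_upwards [hU.mem_nhds hp] with q hq
    refine lieDeriv_frameField_eq_add (hf₁0 q hq) (hf₂0 q hq) ?_
    simp only [pd1, pd2] at hE4
    linear_combination -hE4 q hq
end

section
/- Let U ⊆ ℝ² be open, and let f₁, f₂, θ₁, θ₂, Ψ : U → ℝ be smooth with f₁, f₂ nowhere zero. Set ξᵢ(g) = (1/fᵢ)∂ᵢg, b = -θ₁θ₂ + ξ₂(θ₁), c = θ₁θ₂ + ξ₁(θ₂), and assume the structural equations (E1) ∂₂f₁ + (1/2)f₁f₂θ₂ = 0, (E2) ∂₁f₂ - (1/2)f₁f₂θ₁ = 0, (E3) f₁∂₂Ψ - f₂∂₁c - f₁f₂(cθ₁ + θ₂(Ψ+2)) = 0, (E4) -f₁∂₂b + f₂∂₁Ψ + f₁f₂(bθ₂ + θ₁(Ψ-2)) = 0 hold on U. Then at every point p ∈ U where ξ₁(θ₂)(p) + ξ₂(θ₁)(p) ≠ 0, the invariant Ψ is determined by θ₁ and θ₂: Ψ = (1/(ξ₁(θ₂)+ξ₂(θ₁)))·[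 -6θ₁θ₂ + 2(ξ₂(θ₁) - ξ₁(θ₂)) + 4(θ₂²ξ₂(θ₁) - θ₁²ξ₁(θ₂)) - (3/2)(θ₁θ₂³ + θ₂θ₁³) - 3ξ₁(θ₁)ξ₁(θ₂) - 3ξ₂(θ₁)ξ₂(θ₂) + (7/2)θ₁θ₂(ξ₂(θ₂) - ξ₁(θ₁)) - (7/2)(θ₂ξ₂(ξ₂(θ₁)) + θ₁ξ₁(ξ₁(θ₂))) - θ₁ξ₂(ξ₂(θ₂)) - θ₂ξ₁(ξ₁(θ₁)) + ξ₂(ξ₂(ξ₂(θ₁))) - ξ₁(ξ₁(ξ₁(θ₂))) ] at p. -/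
open scoped Topology

open Filter VectorField

/-!
The operators `ξ₁` and `ξ₂` are the derivatives along the vector fields `V₁ = (1/f₁)∂₁` and
`V₂ = (1/f₂)∂₂`. Equations (E1) and (E2) amount to the single relation
`[V₁, V₂] = -(1/2)(θ₂V₁ + θ₁V₂)`, while (E3) and (E4) prescribe `V₂(Ψ)` and `V₁(Ψ)` as affine
functions of `Ψ`. In the compatibility condition `V₁(V₂(Ψ)) - V₂(V₁(Ψ)) = [V₁, V₂](Ψ)` the first
derivatives of `Ψ` enter only through `θ₂V₁(Ψ) + θ₁V₂(Ψ)`, in which the terms `±θ₁θ₂Ψ` cancel, so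
the condition is linear in `Ψ` with coefficient `V₁(θ₂) + V₂(θ₁)`.
-/

section DerivAlong

variable {𝕜 : Type*} [NontriviallyNormedField 𝕜]
  {E : Type*} [NormedAddCommGroup E] [NormedSpace 𝕜 E]
  {F : Type*} [NormedAddCommGroup F] [NormedSpace 𝕜 F]
  {V : E → E} {p : E}

variable (𝕜) in
/-- The derivative of the function `g` along the vector field `V`, written `V(g)` in differential
geometry. -/
noncomputable def derivAlong (V : E → E) (g : E → F) : E → F := fun q ↦ fderiv 𝕜 g q (V q)

theorem derivAlong_congr {g h : E → F} (hgh : g =ᶠ[𝓝 p] h) :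
    derivAlong 𝕜 V g p = derivAlong 𝕜 V h p := by
  simp only [derivAlong, hgh.fderiv_eq]

theorem derivAlong_neg (g : E → F) : derivAlong 𝕜 V (-g) = -derivAlong 𝕜 V g := by
  funext q
  simp [derivAlong, fderiv_neg]

theorem derivAlong_add {g h : E → F} (hg : DifferentiableAt 𝕜 g p)
    (hh : DifferentiableAt 𝕜 h p) :
    derivAlong 𝕜 V (g + h) p = derivAlong 𝕜 V g p + derivAlong 𝕜 V h p := by
  simp only [derivAlong, fderiv_add hg hh, add_apply]

theorem derivAlong_add_const (g : E → F) (k : F) :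
    derivAlong 𝕜 V (fun q ↦ g q + k) = derivAlong 𝕜 V g := by
  funext q
  simp only [derivAlong, fderiv_add_const]

theorem derivAlong_mul {g h : E → 𝕜} (hg : DifferentiableAt 𝕜 g p)
    (hh : DifferentiableAt 𝕜 h p) :
    derivAlong 𝕜 V (g * h) p = derivAlong 𝕜 V g p * h p + g p * derivAlong 𝕜 V h p := by
  simp only [derivAlong, fderiv_mul hg hh, add_apply, smul_apply, smul_eq_mul]
  ring

theorem contDiffAt_derivAlong {m n : WithTop ℕ∞} {g : E → F} (hV : ContDiffAt 𝕜 m V p)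
    (hg : ContDiffAt 𝕜 n g p) (hmn : m + 1 ≤ n) : ContDiffAt 𝕜 m (derivAlong 𝕜 V g) p :=
  (hg.fderiv_right hmn).clm_apply hV

theorem differentiableAt_derivAlong {g : E → F} (hV : DifferentiableAt 𝕜 V p)
    (hg : ContDiffAt 𝕜 2 g p) : DifferentiableAt 𝕜 (derivAlong 𝕜 V g) p :=
  ((hg.fderiv_right one_add_one_eq_two.le).differentiableAt one_ne_zero).clm_apply hV

theorem derivAlong_derivAlong_add {g h : E → F} (hV : DifferentiableAt 𝕜 V p)
    (hg : ContDiffAt 𝕜 2 g p) (hh : ContDiffAt 𝕜 2 h p) :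
    derivAlong 𝕜 V (derivAlong 𝕜 V (g + h)) p =
      derivAlong 𝕜 V (derivAlong 𝕜 V g) p + derivAlong 𝕜 V (derivAlong 𝕜 V h) p := by
  have hVadd : derivAlong 𝕜 V (g + h) =ᶠ[𝓝 p] derivAlong 𝕜 V g + derivAlong 𝕜 V h := by
    filter_upwards [hg.eventually (by simp), hh.eventually (by simp)] with q hgq hhq
    exact derivAlong_add (hgq.differentiableAt two_ne_zero) (hhq.differentiableAt two_ne_zero)
  rw [derivAlong_congr hVadd,
    derivAlong_add (differentiableAt_derivAlong hV hg) (differentiableAt_derivAlong hV hh)]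

theorem derivAlong_derivAlong_mul {g h : E → 𝕜} (hV : DifferentiableAt 𝕜 V p)
    (hg : ContDiffAt 𝕜 2 g p) (hh : ContDiffAt 𝕜 2 h p) :
    derivAlong 𝕜 V (derivAlong 𝕜 V (g * h)) p =
      derivAlong 𝕜 V (derivAlong 𝕜 V g) p * h p
        + 2 * (derivAlong 𝕜 V g p * derivAlong 𝕜 V h p)
        + g p * derivAlong 𝕜 V (derivAlong 𝕜 V h) p := by
  have dg := hg.differentiableAt two_ne_zero
  have dh := hh.differentiableAt two_ne_zero
  have dVg := differentiableAt_derivAlong hV hg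
  have dVh := differentiableAt_derivAlong hV hh
  have hVmul : derivAlong 𝕜 V (g * h) =ᶠ[𝓝 p]
      derivAlong 𝕜 V g * h + g * derivAlong 𝕜 V h := by
    filter_upwards [hg.eventually (by simp), hh.eventually (by simp)] with q hgq hhq
    exact derivAlong_mul (hgq.differentiableAt two_ne_zero) (hhq.differentiableAt two_ne_zero)
  rw [derivAlong_congr hVmul, derivAlong_add (dVg.mul dh) (dg.mul dVh), derivAlong_mul dVg dh,
    derivAlong_mul dg dVh]
  ring

theorem lieBracket_inv_smul_const {f₁ f₂ : E → 𝕜} (hf₁ : DifferentiableAt 𝕜 f₁ p)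
    (hf₂ : DifferentiableAt 𝕜 f₂ p) (hf₁0 : f₁ p ≠ 0) (hf₂0 : f₂ p ≠ 0) (v w : E) :
    lieBracket 𝕜 (fun q ↦ (f₁ q)⁻¹ • v) (fun q ↦ (f₂ q)⁻¹ • w) p =
      (f₁ p * f₂ p)⁻¹ •
        (fderiv 𝕜 f₁ p w • (f₁ p)⁻¹ • v - fderiv 𝕜 f₂ p v • (f₂ p)⁻¹ • w) := by
  have fderiv_inv_apply {f : E → 𝕜} (hf : DifferentiableAt 𝕜 f p) (hf0 : f p ≠ 0) (u : E) :
      fderiv 𝕜 (fun q ↦ (f q)⁻¹) p u = -(fderiv 𝕜 f p u / f p ^ 2) := by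
    have hinv : HasFDerivAt (fun q ↦ (f q)⁻¹) (-(f p ^ 2)⁻¹ • fderiv 𝕜 f p) p :=
      (hasDerivAt_inv hf0).comp_hasFDerivAt p hf.hasFDerivAt
    simp only [hinv.fderiv, smul_apply, smul_eq_mul, neg_mul, div_eq_inv_mul]
  rw [lieBracket, fderiv_smul_const (hf₂.fun_inv hf₂0), fderiv_smul_const (hf₁.fun_inv hf₁0)]
  simp only [ContinuousLinearMap.smulRight_apply, map_smul, fderiv_inv_apply hf₁ hf₁0,
    fderiv_inv_apply hf₂ hf₂0]
  match_scalars <;> field_simp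

end DerivAlong

section ConformalFrame

variable {𝕜 : Type*} [NontriviallyNormedField 𝕜]
  {E : Type*} [NormedAddCommGroup E] [NormedSpace 𝕜 E]
  {V V₁ V₂ : E → E} {θ₁ θ₂ Ψ b c : E → 𝕜} {p : E}

theorem derivAlong_of_eventuallyEq_affine {a s t u : E → 𝕜} {k : 𝕜} (hV : DifferentiableAt 𝕜 V p)
    (ha : ContDiffAt 𝕜 2 a p) (hs : DifferentiableAt 𝕜 s p) (ht : DifferentiableAt 𝕜 t p)
    (hΨ : DifferentiableAt 𝕜 Ψ p)
    (hu : ∀ᶠ q in 𝓝 p, u q = derivAlong 𝕜 V a q + a q * s q + t q * (Ψ q + k)) :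
    derivAlong 𝕜 V u p = derivAlong 𝕜 V (derivAlong 𝕜 V a) p
      + (derivAlong 𝕜 V a p * s p + a p * derivAlong 𝕜 V s p)
      + (derivAlong 𝕜 V t p * (Ψ p + k) + t p * derivAlong 𝕜 V Ψ p) := by
  have da := ha.differentiableAt two_ne_zero
  have dVa := differentiableAt_derivAlong hV ha
  have dΨk : DifferentiableAt 𝕜 (fun q ↦ Ψ q + k) p := hΨ.add_const k
  have hu' : u =ᶠ[𝓝 p] derivAlong 𝕜 V a + a * s + t * fun q ↦ Ψ q + k := hu
  rw [derivAlong_congr hu', derivAlong_add (dVa.add (da.mul hs)) (ht.mul dΨk),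
    derivAlong_add dVa (da.mul hs), derivAlong_mul da hs, derivAlong_mul ht dΨk,
    derivAlong_add_const]

theorem mul_psi_eq_of_lieBracket_eq [CharZero 𝕜]
    (hV₁ : DifferentiableAt 𝕜 V₁ p) (hV₂ : DifferentiableAt 𝕜 V₂ p)
    (hθ₁ : DifferentiableAt 𝕜 θ₁ p) (hθ₂ : DifferentiableAt 𝕜 θ₂ p)
    (hb : ContDiffAt 𝕜 2 b p) (hc : ContDiffAt 𝕜 2 c p)
    (hΨ : ContDiffAt 𝕜 (minSmoothness 𝕜 2) Ψ p)
    (hV : lieBracket 𝕜 V₁ V₂ p = -(1 / 2 : 𝕜) • (θ₂ p • V₁ p + θ₁ p • V₂ p))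
    (hΨ₂ : ∀ᶠ q in 𝓝 p,
      derivAlong 𝕜 V₂ Ψ q = derivAlong 𝕜 V₁ c q + c q * θ₁ q + θ₂ q * (Ψ q + 2))
    (hΨ₁ : ∀ᶠ q in 𝓝 p,
      derivAlong 𝕜 V₁ Ψ q = derivAlong 𝕜 V₂ b q - b q * θ₂ q - θ₁ q * (Ψ q - 2)) :
    (derivAlong 𝕜 V₁ θ₂ p + derivAlong 𝕜 V₂ θ₁ p) * Ψ p =
      derivAlong 𝕜 V₂ (derivAlong 𝕜 V₂ b) p - derivAlong 𝕜 V₁ (derivAlong 𝕜 V₁ c) p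
        - 5 / 2 * (θ₁ p * derivAlong 𝕜 V₁ c p + θ₂ p * derivAlong 𝕜 V₂ b p)
        - c p * derivAlong 𝕜 V₁ θ₁ p - b p * derivAlong 𝕜 V₂ θ₂ p
        - 3 / 2 * (θ₁ p ^ 2 * c p - θ₂ p ^ 2 * b p)
        + 2 * (derivAlong 𝕜 V₂ θ₁ p - derivAlong 𝕜 V₁ θ₂ p) - 6 * θ₁ p * θ₂ p := by
  have dΨ : DifferentiableAt 𝕜 Ψ p :=
    (hΨ.of_le le_minSmoothness).differentiableAt two_ne_zero
  have hV₁V₂Ψ := derivAlong_of_eventuallyEq_affine hV₁ hc hθ₁ hθ₂ dΨ hΨ₂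
  have hV₂V₁Ψ := derivAlong_of_eventuallyEq_affine (u := derivAlong 𝕜 V₁ Ψ)
    (s := -θ₂) (t := -θ₁) (k := -2) hV₂ hb hθ₂.neg hθ₁.neg dΨ <| hΨ₁.mono fun q hq ↦ by
      simp only [hq, Pi.neg_apply]
      ring
  have hcomm : derivAlong 𝕜 (lieBracket 𝕜 V₁ V₂) Ψ p =
      derivAlong 𝕜 V₁ (derivAlong 𝕜 V₂ Ψ) p - derivAlong 𝕜 V₂ (derivAlong 𝕜 V₁ Ψ) p :=
    fderiv_apply_lieBracket hΨ le_rfl hV₂ hV₁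
  have hbracket : derivAlong 𝕜 (lieBracket 𝕜 V₁ V₂) Ψ p =
      -(1 / 2) * (θ₂ p * derivAlong 𝕜 V₁ Ψ p + θ₁ p * derivAlong 𝕜 V₂ Ψ p) := by
    simp only [derivAlong, hV, map_smul, map_add, smul_eq_mul]
  rw [hbracket, hV₁V₂Ψ, hV₂V₁Ψ, hΨ₁.self_of_nhds, hΨ₂.self_of_nhds] at hcomm
  simp only [derivAlong_neg, Pi.neg_apply] at hcomm
  linear_combination -hcomm

theorem psi_determined_by_thetas_general [CharZero 𝕜]
    (hV₁ : ContDiffAt 𝕜 2 V₁ p) (hV₂ : ContDiffAt 𝕜 2 V₂ p)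
    (hθ₁ : ContDiffAt 𝕜 3 θ₁ p) (hθ₂ : ContDiffAt 𝕜 3 θ₂ p)
    (hΨ : ContDiffAt 𝕜 (minSmoothness 𝕜 2) Ψ p)
    (hb : b = -θ₁ * θ₂ + derivAlong 𝕜 V₂ θ₁) (hc : c = θ₁ * θ₂ + derivAlong 𝕜 V₁ θ₂)
    (hV : lieBracket 𝕜 V₁ V₂ p = -(1 / 2 : 𝕜) • (θ₂ p • V₁ p + θ₁ p • V₂ p))
    (hΨ₂ : ∀ᶠ q in 𝓝 p,
      derivAlong 𝕜 V₂ Ψ q = derivAlong 𝕜 V₁ c q + c q * θ₁ q + θ₂ q * (Ψ q + 2))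
    (hΨ₁ : ∀ᶠ q in 𝓝 p,
      derivAlong 𝕜 V₁ Ψ q = derivAlong 𝕜 V₂ b q - b q * θ₂ q - θ₁ q * (Ψ q - 2)) :
    (derivAlong 𝕜 V₁ θ₂ p + derivAlong 𝕜 V₂ θ₁ p) * Ψ p =
      -6 * θ₁ p * θ₂ p + 2 * (derivAlong 𝕜 V₂ θ₁ p - derivAlong 𝕜 V₁ θ₂ p)
        + 4 * (θ₂ p ^ 2 * derivAlong 𝕜 V₂ θ₁ p - θ₁ p ^ 2 * derivAlong 𝕜 V₁ θ₂ p)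
        - (3 / 2) * (θ₁ p * θ₂ p ^ 3 + θ₂ p * θ₁ p ^ 3)
        - 3 * derivAlong 𝕜 V₁ θ₁ p * derivAlong 𝕜 V₁ θ₂ p
        - 3 * derivAlong 𝕜 V₂ θ₁ p * derivAlong 𝕜 V₂ θ₂ p
        + (7 / 2) * θ₁ p * θ₂ p * (derivAlong 𝕜 V₂ θ₂ p - derivAlong 𝕜 V₁ θ₁ p)
        - (7 / 2) * (θ₂ p * derivAlong 𝕜 V₂ (derivAlong 𝕜 V₂ θ₁) p
          + θ₁ p * derivAlong 𝕜 V₁ (derivAlong 𝕜 V₁ θ₂) p)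
        - θ₁ p * derivAlong 𝕜 V₂ (derivAlong 𝕜 V₂ θ₂) p
        - θ₂ p * derivAlong 𝕜 V₁ (derivAlong 𝕜 V₁ θ₁) p
        + derivAlong 𝕜 V₂ (derivAlong 𝕜 V₂ (derivAlong 𝕜 V₂ θ₁)) p
        - derivAlong 𝕜 V₁ (derivAlong 𝕜 V₁ (derivAlong 𝕜 V₁ θ₂)) p := by
  have dV₁ := hV₁.differentiableAt two_ne_zero
  have dV₂ := hV₂.differentiableAt two_ne_zero
  have hθ₁' : ContDiffAt 𝕜 2 θ₁ p := hθ₁.of_le (by norm_num)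
  have hθ₂' : ContDiffAt 𝕜 2 θ₂ p := hθ₂.of_le (by norm_num)
  have dθ₁ := hθ₁.differentiableAt three_ne_zero
  have dθ₂ := hθ₂.differentiableAt three_ne_zero
  have hV₂θ₁ : ContDiffAt 𝕜 2 (derivAlong 𝕜 V₂ θ₁) p :=
    contDiffAt_derivAlong hV₂ hθ₁ two_add_one_eq_three.le
  have hV₁θ₂ : ContDiffAt 𝕜 2 (derivAlong 𝕜 V₁ θ₂) p :=
    contDiffAt_derivAlong hV₁ hθ₂ two_add_one_eq_three.le
  have hb' : ContDiffAt 𝕜 2 b p := hb ▸ (hθ₁'.neg.mul hθ₂').add hV₂θ₁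
  have hc' : ContDiffAt 𝕜 2 c p := hc ▸ (hθ₁'.mul hθ₂').add hV₁θ₂
  rw [mul_psi_eq_of_lieBracket_eq dV₁ dV₂ dθ₁ dθ₂ hb' hc' hΨ hV hΨ₂ hΨ₁, hb, hc,
    derivAlong_derivAlong_add (g := -θ₁ * θ₂) dV₂ (hθ₁'.neg.mul hθ₂') hV₂θ₁,
    derivAlong_derivAlong_mul (g := -θ₁) dV₂ hθ₁'.neg hθ₂',
    derivAlong_derivAlong_add (g := θ₁ * θ₂) dV₁ (hθ₁'.mul hθ₂') hV₁θ₂,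
    derivAlong_derivAlong_mul dV₁ hθ₁' hθ₂',
    derivAlong_add (dθ₁.neg.mul dθ₂) (hV₂θ₁.differentiableAt two_ne_zero),
    derivAlong_mul dθ₁.neg dθ₂,
    derivAlong_add (dθ₁.mul dθ₂) (hV₁θ₂.differentiableAt two_ne_zero), derivAlong_mul dθ₁ dθ₂]
  simp only [derivAlong_neg, Pi.add_apply, Pi.mul_apply, Pi.neg_apply]
  ring

end ConformalFrame

section Coordinates

variable {f₁ f₂ θ₁ θ₂ Ψ b c : ℝ × ℝ → ℝ} {p : ℝ × ℝ}

theorem xi1_eq_derivAlong (f g : ℝ × ℝ → ℝ) :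
    xi1 f g = derivAlong ℝ (fun q ↦ (f q)⁻¹ • (1, 0)) g := by
  funext q
  simp only [xi1, pd1, derivAlong, map_smul, smul_eq_mul, one_div]

theorem xi2_eq_derivAlong (f g : ℝ × ℝ → ℝ) :
    xi2 f g = derivAlong ℝ (fun q ↦ (f q)⁻¹ • (0, 1)) g := by
  funext q
  simp only [xi2, pd2, derivAlong, map_smul, smul_eq_mul, one_div]

theorem lieBracket_xi_frame (hf₁ : DifferentiableAt ℝ f₁ p)
    (hf₂ : DifferentiableAt ℝ f₂ p) (hf₁0 : f₁ p ≠ 0) (hf₂0 : f₂ p ≠ 0)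
    (hE1 : pd2 f₁ p + (1 / 2) * f₁ p * f₂ p * θ₂ p = 0)
    (hE2 : pd1 f₂ p - (1 / 2) * f₁ p * f₂ p * θ₁ p = 0) :
    lieBracket ℝ (fun q ↦ (f₁ q)⁻¹ • (1, 0)) (fun q ↦ (f₂ q)⁻¹ • (0, 1)) p =
      -(1 / 2 : ℝ) • (θ₂ p • (f₁ p)⁻¹ • (1, 0) + θ₁ p • (f₂ p)⁻¹ • ((0, 1) : ℝ × ℝ)) := by
  have hf₁' : fderiv ℝ f₁ p (0, 1) = -(1 / 2 * f₁ p * f₂ p * θ₂ p) :=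
    eq_neg_of_add_eq_zero_left hE1
  have hf₂' : fderiv ℝ f₂ p (1, 0) = 1 / 2 * f₁ p * f₂ p * θ₁ p := sub_eq_zero.mp hE2
  rw [lieBracket_inv_smul_const hf₁ hf₂ hf₁0 hf₂0, hf₁', hf₂']
  match_scalars <;> field_simp

theorem xi2_psi_eq (hf₁0 : f₁ p ≠ 0) (hf₂0 : f₂ p ≠ 0)
    (hE3 : f₁ p * pd2 Ψ p - f₂ p * pd1 c p
      - f₁ p * f₂ p * (c p * θ₁ p + θ₂ p * (Ψ p + 2)) = 0) :
    xi2 f₂ Ψ p = xi1 f₁ c p + c p * θ₁ p + θ₂ p * (Ψ p + 2) := by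
  simp only [xi1, xi2]
  field_simp
  linear_combination hE3

theorem xi1_psi_eq (hf₁0 : f₁ p ≠ 0) (hf₂0 : f₂ p ≠ 0)
    (hE4 : -(f₁ p) * pd2 b p + f₂ p * pd1 Ψ p
      + f₁ p * f₂ p * (b p * θ₂ p + θ₁ p * (Ψ p - 2)) = 0) :
    xi1 f₁ Ψ p = xi2 f₂ b p - b p * θ₂ p - θ₁ p * (Ψ p - 2) := by
  simp only [xi1, xi2]
  field_simp
  linear_combination hE4

end Coordinates

/-- Under the structural equations (E1)–(E4), at every point where
`ξ₁(θ₂) + ξ₂(θ₁) ≠ 0`, the invariant Ψ is expressed in terms of θ₁, θ₂ and their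
ξ-derivatives by formula (12) of the paper. -/
theorem psi_determined_by_thetas
    (U : Set (ℝ × ℝ)) (hU : IsOpen U)
    (f₁ f₂ θ₁ θ₂ Ψ : ℝ × ℝ → ℝ)
    (hf₁ : ContDiffOn ℝ (⊤ : ℕ∞) f₁ U) (hf₂ : ContDiffOn ℝ (⊤ : ℕ∞) f₂ U)
    (hθ₁ : ContDiffOn ℝ (⊤ : ℕ∞) θ₁ U) (hθ₂ : ContDiffOn ℝ (⊤ : ℕ∞) θ₂ U)
    (hΨ : ContDiffOn ℝ (⊤ : ℕ∞) Ψ U)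
    (hf₁0 : ∀ p ∈ U, f₁ p ≠ 0) (hf₂0 : ∀ p ∈ U, f₂ p ≠ 0)
    (hE1 : ∀ p ∈ U, pd2 f₁ p + (1 / 2) * f₁ p * f₂ p * θ₂ p = 0)
    (hE2 : ∀ p ∈ U, pd1 f₂ p - (1 / 2) * f₁ p * f₂ p * θ₁ p = 0)
    (hE3 : ∀ p ∈ U, f₁ p * pd2 Ψ p - f₂ p * pd1 (cfun f₁ θ₁ θ₂) p
      - f₁ p * f₂ p * (cfun f₁ θ₁ θ₂ p * θ₁ p + θ₂ p * (Ψ p + 2)) = 0)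
    (hE4 : ∀ p ∈ U, -(f₁ p) * pd2 (bfun f₂ θ₁ θ₂) p + f₂ p * pd1 Ψ p
      + f₁ p * f₂ p * (bfun f₂ θ₁ θ₂ p * θ₂ p + θ₁ p * (Ψ p - 2)) = 0) :
    ∀ p ∈ U, xi1 f₁ θ₂ p + xi2 f₂ θ₁ p ≠ 0 →
      Ψ p = (1 / (xi1 f₁ θ₂ p + xi2 f₂ θ₁ p)) *
        (-6 * θ₁ p * θ₂ p + 2 * (xi2 f₂ θ₁ p - xi1 f₁ θ₂ p)
          + 4 * ((θ₂ p) ^ 2 * xi2 f₂ θ₁ p - (θ₁ p) ^ 2 * xi1 f₁ θ₂ p)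
          - (3 / 2) * (θ₁ p * (θ₂ p) ^ 3 + θ₂ p * (θ₁ p) ^ 3)
          - 3 * xi1 f₁ θ₁ p * xi1 f₁ θ₂ p - 3 * xi2 f₂ θ₁ p * xi2 f₂ θ₂ p
          + (7 / 2) * θ₁ p * θ₂ p * (xi2 f₂ θ₂ p - xi1 f₁ θ₁ p)
          - (7 / 2) * (θ₂ p * xi2 f₂ (xi2 f₂ θ₁) p + θ₁ p * xi1 f₁ (xi1 f₁ θ₂) p)
          - θ₁ p * xi2 f₂ (xi2 f₂ θ₂) p - θ₂ p * xi1 f₁ (xi1 f₁ θ₁) p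
          + xi2 f₂ (xi2 f₂ (xi2 f₂ θ₁)) p - xi1 f₁ (xi1 f₁ (xi1 f₁ θ₂)) p) := by
  intro p hp hne
  have contDiffAt {g : ℝ × ℝ → ℝ} (hg : ContDiffOn ℝ (⊤ : ℕ∞) g U) (n : ℕ) :
      ContDiffAt ℝ n g p :=
    (hg.contDiffAt (hU.mem_nhds hp)).of_le (mod_cast le_top)
  have differentiableAt {g : ℝ × ℝ → ℝ} (hg : ContDiffOn ℝ (⊤ : ℕ∞) g U) :
      DifferentiableAt ℝ g p :=
    (contDiffAt hg 1).differentiableAt one_ne_zero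
  have hU' : ∀ᶠ q in 𝓝 p, q ∈ U := hU.mem_nhds hp
  have hΨ₂ := hU'.mono fun q hq ↦ xi2_psi_eq (hf₁0 q hq) (hf₂0 q hq) (hE3 q hq)
  have hΨ₁ := hU'.mono fun q hq ↦ xi1_psi_eq (hf₁0 q hq) (hf₂0 q hq) (hE4 q hq)
  rw [one_div, eq_inv_mul_iff_mul_eq₀ hne]
  simp only [xi1_eq_derivAlong, xi2_eq_derivAlong] at hΨ₁ hΨ₂ ⊢
  exact psi_determined_by_thetas_general
    (((contDiffAt hf₁ 2).inv (hf₁0 p hp)).smul contDiffAt_const)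
    (((contDiffAt hf₂ 2).inv (hf₂0 p hp)).smul contDiffAt_const)
    (contDiffAt hθ₁ 3) (contDiffAt hθ₂ 3) (by simpa using contDiffAt hΨ 2)
    (congrArg _ (xi2_eq_derivAlong f₂ θ₁)) (congrArg _ (xi1_eq_derivAlong f₁ θ₂))
    (lieBracket_xi_frame (differentiableAt hf₁) (differentiableAt hf₂)
      (hf₁0 p hp) (hf₂0 p hp) (hE1 p hp) (hE2 p hp)) hΨ₂ hΨ₁
end
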